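/- Let ω = (w₁,…,w_m) be a weight vector and let A₁,…,A_m be n×n positive definite complex matrices satisfying αI ≤ A_j ≤ βI for all j, for some scalars 0 < α ≤ β. Then there exists a positive definite matrix X with αI ≤ X ≤ βI such that Σᵢ₌₁^m wᵢ log(Aᵢ ♯ X⁻¹) = 0; in other words, Γ(ω; A₁,…,A_m) is nonempty. -/

import Mathlib

/-!
The equation is solved by a fixed-point argument. Put `F X = ∑ᵢ wᵢ log (Aᵢ ♯ X⁻¹)`, let `clampHerm`
be the truncation of the spectrum of the Hermitian part of a matrix to `[α, β]`, and let
`Φ M = X + F X` with `X = clampHerm α β M`. The map `Φ` is continuous and bounded on the real vector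
space of all matrices, so Brouwer's theorem gives `H` with `Φ H = H`; `H` is Hermitian and `X` is the
truncation of `H`.

Let `v` be a unit eigenvector of `H` with eigenvalue `h`. Then `⟨v, F X v⟩` is `h` minus the
truncation of `h`. The mean `G = Aᵢ ♯ X⁻¹` is the positive solution of `G X G = Aᵢ`
(`geom_riccati`). If `h > β`, then `X v = β v`, and `log G ≤ G - 1`, `(G - 1) X (G - 1) ≥ 0` and
`Aᵢ ≤ β` give `⟨v, log G v⟩ ≤ 0` (`qform_mlog_nonpos`), a contradiction. If `h < α`, then
`X v = α v`, and `log G ≥ (1 - G⁻²) / 2` and `G⁻¹ (Aᵢ - α) G⁻¹ ≥ 0` give `⟨v, log G v⟩ ≥ 0`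
(`qform_mlog_nonneg`), a contradiction again. So the truncation leaves `H` unchanged: `X = H`, and
hence `F X = 0`.

Brouwer's theorem is proved analytically. Let `ψ` be `C¹` and vanish outside a ball `B`. For small
`t` the map `x ↦ x - t ψ x` is a bijection of `B` with positive Jacobian determinant, so
`∫_B det (1 - t ψ') (S - ‖x - t ψ x‖²)^k = ∫_B (S - ‖x‖²)^k` by change of variables. The left side
is a polynomial in `t`, so the equality persists at `t = 1` (`brouwer_identity`). If `ψ` had no fixed
point, then `‖x - ψ x‖` would be bounded below on `B` by some `ε > 0`, and the left side would grow
at most like `(S - ε²)^k`, while the right side grows at least like `(S - ε²/4)^k`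
(`brouwer_smooth`). Smooth approximation extends the result to bounded continuous maps.
-/

open Matrix
open scoped ComplexOrder

/-- Functional calculus for Hermitian matrices: apply `f` to the eigenvalues. -/
noncomputable def herm {n : ℕ} (f : ℝ → ℝ) (A : Matrix (Fin n) (Fin n) ℂ) :
    Matrix (Fin n) (Fin n) ℂ :=
  if hA : A.IsHermitian then
    (hA.eigenvectorUnitary : Matrix (Fin n) (Fin n) ℂ) *
      Matrix.diagonal (fun i => (f (hA.eigenvalues i) : ℂ)) *
      (star (hA.eigenvectorUnitary : Matrix (Fin n) (Fin n) ℂ))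
  else 0

/-- Square root of a positive definite matrix. -/
noncomputable def msqrt {n : ℕ} (A : Matrix (Fin n) (Fin n) ℂ) : Matrix (Fin n) (Fin n) ℂ :=
  herm Real.sqrt A

/-- Logarithm of a positive definite matrix. -/
noncomputable def mlog {n : ℕ} (A : Matrix (Fin n) (Fin n) ℂ) : Matrix (Fin n) (Fin n) ℂ :=
  herm Real.log A

/-- Real power of a positive definite matrix. -/
noncomputable def mpow {n : ℕ} (A : Matrix (Fin n) (Fin n) ℂ) (t : ℝ) :
    Matrix (Fin n) (Fin n) ℂ :=
  herm (fun x => x ^ t) A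

/-- Metric geometric mean `A ♯ B = A^{1/2} (A^{-1/2} B A^{-1/2})^{1/2} A^{1/2}`. -/
noncomputable def geom {n : ℕ} (A B : Matrix (Fin n) (Fin n) ℂ) : Matrix (Fin n) (Fin n) ℂ :=
  msqrt A * msqrt ((msqrt A)⁻¹ * B * (msqrt A)⁻¹) * msqrt A

/-- The solution set `Γ(ω; A₁,…,A_m)` of the spectral-geometric-mean equation
`∑ᵢ wᵢ log(Aᵢ ♯ X⁻¹) = 0` among positive definite matrices. -/
noncomputable def Gamma {m n : ℕ} (w : Fin m → ℝ) (A : Fin m → Matrix (Fin n) (Fin n) ℂ) :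
    Set (Matrix (Fin n) (Fin n) ℂ) :=
  {X | X.PosDef ∧ ∑ i, w i • mlog (geom (A i) X⁻¹) = 0}

section Brouwer

/-! ### An integral identity for `C¹` maps of compact support -/

open MeasureTheory Metric Set Filter Topology

/-- Evaluation at `(t, x)` of a polynomial in `t` whose coefficients are continuous functions
of `x`. It is a ring homomorphism, so it commutes with determinants. -/
noncomputable def evPoly {d : ℕ} (t : ℝ) (x : EuclideanSpace ℝ (Fin d)) :
    Polynomial C(EuclideanSpace ℝ (Fin d), ℝ) →+* ℝ :=
  Polynomial.eval₂RingHom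
    ((Pi.evalRingHom (fun _ : EuclideanSpace ℝ (Fin d) => ℝ) x).comp
      ContinuousMap.coeFnRingHom) t

lemma evPoly_C {d : ℕ} (t : ℝ) (x : EuclideanSpace ℝ (Fin d))
    (c : C(EuclideanSpace ℝ (Fin d), ℝ)) : evPoly t x (Polynomial.C c) = c x := by
  simp [evPoly]

lemma evPoly_X {d : ℕ} (t : ℝ) (x : EuclideanSpace ℝ (Fin d)) :
    evPoly t x Polynomial.X = t := by
  simp [evPoly]

/-- Integrating over `x` turns a polynomial in `t` with continuous coefficients into a real
polynomial in `t`. -/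
lemma integral_evPoly {d : ℕ} (q : Polynomial C(EuclideanSpace ℝ (Fin d), ℝ))
    {K : Set (EuclideanSpace ℝ (Fin d))} (hK : IsCompact K) :
    ∃ P : Polynomial ℝ, ∀ t : ℝ, ∫ x in K, evPoly t x q = P.eval t := by
  refine ⟨∑ i ∈ q.support, Polynomial.C (∫ x in K, q.coeff i x) * Polynomial.X ^ i, fun t => ?_⟩
  have h : ∀ x, evPoly t x q = ∑ i ∈ q.support, q.coeff i x * t ^ i := by
    intro x
    simp [evPoly, Polynomial.eval₂_eq_sum, Polynomial.sum_def]
  simp_rw [h]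
  rw [integral_finsetSum]
  · simp [Polynomial.eval_finsetSum, integral_mul_const]
  · intro i _
    exact (((q.coeff i).continuous.mul continuous_const).continuousOn).integrableOn_compact hK

/-- The integrand of the Jacobian identity is polynomial in `t`; this is what lets an identity for
small `t` be continued to `t = 1`. -/
lemma brouwer_poly {d : ℕ} (ψ : EuclideanSpace ℝ (Fin d) → EuclideanSpace ℝ (Fin d))
    (hψ : ContDiff ℝ 1 ψ) (S : ℝ) (k : ℕ) :
    ∃ q : Polynomial C(EuclideanSpace ℝ (Fin d), ℝ), ∀ t x,
      evPoly t x q = (ContinuousLinearMap.id ℝ _ - t • fderiv ℝ ψ x).det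
        * (S - ‖x - t • ψ x‖ ^ 2) ^ k := by
  have hcd : Continuous (fderiv ℝ ψ) := hψ.continuous_fderiv (by simp)
  let b := (EuclideanSpace.basisFun (Fin d) ℝ).toBasis
  let m : Fin d → Fin d → C(EuclideanSpace ℝ (Fin d), ℝ) := fun i j =>
    ⟨fun x => fderiv ℝ ψ x (EuclideanSpace.single j 1) i, by fun_prop⟩
  let u : Fin d → C(EuclideanSpace ℝ (Fin d), ℝ) := fun i => ⟨fun x => x i, by fun_prop⟩
  let v : Fin d → C(EuclideanSpace ℝ (Fin d), ℝ) := fun i =>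
    ⟨fun x => ψ x i, by have := hψ.continuous; fun_prop⟩
  let M : Matrix (Fin d) (Fin d) (Polynomial C(EuclideanSpace ℝ (Fin d), ℝ)) :=
    Matrix.of fun i j => (if i = j then 1 else 0) - Polynomial.X * Polynomial.C (m i j)
  refine ⟨M.det * (Polynomial.C (ContinuousMap.const _ S) -
    ∑ i, (Polynomial.C (u i) - Polynomial.X * Polynomial.C (v i)) ^ 2) ^ k, fun t x => ?_⟩
  rw [map_mul, map_pow, map_sub, map_sum, RingHom.map_det, evPoly_C]
  congr 1
  · rw [ContinuousLinearMap.det, ← LinearMap.det_toMatrix b]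
    congr 1
    ext i j
    simp [M, LinearMap.toMatrix_apply, b, evPoly_C, evPoly_X, m]
    ring
  · simp [EuclideanSpace.real_norm_sq_eq, evPoly_C, evPoly_X, u, v]
    simp only [mul_comm]

/-- For small `t` the map `x ↦ x - t ψ x` is an orientation-preserving bijection of the ball, so the
change of variables formula applies. -/
lemma brouwer_small {d : ℕ} (ψ : EuclideanSpace ℝ (Fin d) → EuclideanSpace ℝ (Fin d))
    (hψ : ContDiff ℝ 1 ψ) (R : ℝ) (hR : ∀ x, x ∉ closedBall 0 R → ψ x = 0)
    (f : EuclideanSpace ℝ (Fin d) → ℝ) :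
    ∀ᶠ t : ℝ in 𝓝 0, ∫ x in closedBall 0 R,
      (ContinuousLinearMap.id ℝ _ - t • fderiv ℝ ψ x).det * f (x - t • ψ x) =
      ∫ x in closedBall 0 R, f x := by
  have hcd : Continuous (fderiv ℝ ψ) := hψ.continuous_fderiv (by simp)
  have hcs : HasCompactSupport ψ := HasCompactSupport.intro (isCompact_closedBall 0 R) hR
  obtain ⟨C, hC⟩ := hψ.lipschitzWith_of_hasCompactSupport hcs (by simp)
  have hpos : ∀ᶠ t : ℝ in 𝓝 0, ∀ x ∈ closedBall (0 : EuclideanSpace ℝ (Fin d)) R,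
      0 < (ContinuousLinearMap.id ℝ _ - t • fderiv ℝ ψ x).det := by
    apply (isCompact_closedBall _ R).eventually_forall_of_forall_eventually
    intro x _
    have hc : Continuous fun p : ℝ × EuclideanSpace ℝ (Fin d) =>
        (ContinuousLinearMap.id ℝ _ - p.1 • fderiv ℝ ψ p.2).det :=
      ContinuousLinearMap.continuous_det.comp (by fun_prop)
    refine (hc.tendsto (0, x)).eventually (lt_mem_nhds ?_)
    simp [ContinuousLinearMap.det]
  have hsm : ∀ᶠ t : ℝ in 𝓝 0, ‖t‖₊ * C < 1 := by
    have hc : Continuous fun t : ℝ => ‖t‖₊ * C := by fun_prop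
    exact (hc.tendsto 0).eventually (gt_mem_nhds (by simp))
  filter_upwards [hpos, hsm] with t ht hts
  set g : EuclideanSpace ℝ (Fin d) → EuclideanSpace ℝ (Fin d) := fun x => x - t • ψ x with hg
  -- `g` is a small Lipschitz perturbation of the identity, hence bijective on the whole space.
  have happ : ApproximatesLinearOn g
      ((ContinuousLinearEquiv.refl ℝ (EuclideanSpace ℝ (Fin d)) :
        EuclideanSpace ℝ (Fin d) →L[ℝ] EuclideanSpace ℝ (Fin d))) univ (‖t‖₊ * C) := by
    intro x _ y _
    have : g x - g y - (x - y) = -(t • (ψ x - ψ y)) := by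
      simp only [hg, smul_sub]; abel
    have h2 := hC.dist_le_mul x y
    rw [dist_eq_norm, dist_eq_norm] at h2
    simp only [ContinuousLinearEquiv.coe_refl, ContinuousLinearMap.coe_id', id_eq, this,
      norm_neg, norm_smul, NNReal.coe_mul, coe_nnnorm]
    rw [mul_assoc]
    gcongr
  have hN : Subsingleton (EuclideanSpace ℝ (Fin d)) ∨ ‖t‖₊ * C <
      ‖((ContinuousLinearEquiv.refl ℝ (EuclideanSpace ℝ (Fin d))).symm :
        EuclideanSpace ℝ (Fin d) →L[ℝ] EuclideanSpace ℝ (Fin d))‖₊⁻¹ := by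
    rcases subsingleton_or_nontrivial (EuclideanSpace ℝ (Fin d)) with h | h
    · exact Or.inl h
    · right
      simpa using hts
  have hinj : Function.Injective g := injOn_univ.1 (happ.injOn hN)
  have hsurj : Function.Surjective g := happ.surjective hN
  -- `g` is the identity off the ball, so being bijective it maps the ball onto itself.
  have himc : g '' (closedBall 0 R)ᶜ = (closedBall 0 R)ᶜ := by
    have : EqOn g id (closedBall 0 R)ᶜ := fun x hx => by simp [hg, hR x hx]
    rw [this.image_eq, image_id]
  have him : g '' closedBall 0 R = closedBall 0 R := by
    rw [image_compl_eq ⟨hinj, hsurj⟩] at himc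
    exact compl_injective himc
  have hder : ∀ x ∈ closedBall (0 : EuclideanSpace ℝ (Fin d)) R, HasFDerivWithinAt g
      (ContinuousLinearMap.id ℝ _ - t • fderiv ℝ ψ x) (closedBall 0 R) x := by
    intro x _
    exact ((hasFDerivAt_id x).sub
      (((hψ.differentiable (by simp)) x).hasFDerivAt.const_smul t)).hasFDerivWithinAt
  have := integral_image_eq_integral_abs_det_fderiv_smul volume
    (measurableSet_closedBall (x := (0 : EuclideanSpace ℝ (Fin d))) (ε := R)) hder hinj.injOn f
  rw [him] at this
  rw [this]
  refine setIntegral_congr_fun measurableSet_closedBall fun x hx => ?_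
  simp only [hg, abs_of_pos (ht x hx), smul_eq_mul]

/-- The change of variables identity for `x ↦ x - ψ x`, although this map need not be injective:
the integral depends polynomially on the parameter `t` in `x ↦ x - t ψ x` and is constant near
`t = 0`. -/
lemma brouwer_identity {d : ℕ} (ψ : EuclideanSpace ℝ (Fin d) → EuclideanSpace ℝ (Fin d))
    (hψ : ContDiff ℝ 1 ψ) (R : ℝ) (hR : ∀ x, x ∉ closedBall 0 R → ψ x = 0) (S : ℝ) (k : ℕ) :
    ∫ x in closedBall 0 R,
      (ContinuousLinearMap.id ℝ _ - fderiv ℝ ψ x).det * (S - ‖x - ψ x‖ ^ 2) ^ k =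
      ∫ x in closedBall (0 : EuclideanSpace ℝ (Fin d)) R, (S - ‖x‖ ^ 2) ^ k := by
  obtain ⟨q, hq⟩ := brouwer_poly ψ hψ S k
  obtain ⟨P, hP⟩ := integral_evPoly q (isCompact_closedBall 0 R)
  have hsmall := brouwer_small ψ hψ R hR (fun y => (S - ‖y‖ ^ 2) ^ k)
  set c := ∫ x in closedBall (0 : EuclideanSpace ℝ (Fin d)) R, (S - ‖x‖ ^ 2) ^ k
  have hPc : P = Polynomial.C c := by
    apply Polynomial.eq_of_infinite_eval_eq
    refine infinite_of_mem_nhds (0 : ℝ) ?_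
    filter_upwards [hsmall] with t ht
    change P.eval t = (Polynomial.C c).eval t
    rw [← hP t, Polynomial.eval_C, ← ht]
    simp_rw [hq]
  have h1 := hP 1
  rw [hPc, Polynomial.eval_C] at h1
  simpa [hq] using h1

/-! ### Brouwer's fixed-point theorem -/

/-- Without a fixed point, the left side of `brouwer_identity` would be `O((S - ε²)^k)`, while the
ball of radius `ε / 2` contributes at least a constant times `(S - ε²/4)^k` to the right side. -/
lemma brouwer_smooth {d : ℕ} (ψ : EuclideanSpace ℝ (Fin d) → EuclideanSpace ℝ (Fin d))
    (hψ : ContDiff ℝ 1 ψ) (R : ℝ) (hR0 : 0 < R) (hR : ∀ x, x ∉ closedBall 0 R → ψ x = 0) :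
    ∃ x, ψ x = x := by
  by_contra! hne
  have hcont := hψ.continuous
  have hcd : Continuous (fderiv ℝ ψ) := hψ.continuous_fderiv (by simp)
  set B := closedBall (0 : EuclideanSpace ℝ (Fin d)) R with hB
  have hBc : IsCompact B := isCompact_closedBall 0 R
  have hzero : (0 : EuclideanSpace ℝ (Fin d)) ∈ B := by simp [hB, hR0.le]
  obtain ⟨x₀, hx₀, hmin⟩ := hBc.exists_isMinOn ⟨0, hzero⟩
    (f := fun x => ‖x - ψ x‖) (by fun_prop)
  obtain ⟨x₁, hx₁, hmax⟩ := hBc.exists_isMaxOn ⟨0, hzero⟩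
    (f := fun x => ‖x - ψ x‖) (by fun_prop)
  have hdetc : Continuous fun x => (ContinuousLinearMap.id ℝ _ - fderiv ℝ ψ x).det :=
    ContinuousLinearMap.continuous_det.comp (by fun_prop)
  obtain ⟨D, hD⟩ := hBc.exists_bound_of_continuousOn hdetc.continuousOn
  have hD0 : 0 ≤ D := (norm_nonneg _).trans (hD 0 hzero)
  set ε := min ‖x₀ - ψ x₀‖ R with hε
  have hε0 : 0 < ε := lt_min (norm_pos_iff.2 (sub_ne_zero.2 (hne x₀).symm)) hR0
  have hεR : ε ≤ R := min_le_right _ _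
  -- `S` dominates both squared norms on `B`, so all the bases of the powers are nonnegative.
  set S := ‖x₁ - ψ x₁‖ ^ 2 + R ^ 2 with hS
  have hlow : ∀ x ∈ B, ε ≤ ‖x - ψ x‖ := fun x hx => (min_le_left _ _).trans (hmin hx)
  have hup : ∀ x ∈ B, ‖x - ψ x‖ ^ 2 ≤ S := fun x hx => by
    have : ‖x - ψ x‖ ≤ ‖x₁ - ψ x₁‖ := hmax hx
    have : ‖x - ψ x‖ ^ 2 ≤ ‖x₁ - ψ x₁‖ ^ 2 := by gcongr
    nlinarith [sq_nonneg R]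
  have hup' : ∀ x ∈ B, ‖x‖ ^ 2 ≤ S := fun x hx => by
    have : ‖x‖ ≤ R := by simpa [hB] using hx
    have : ‖x‖ ^ 2 ≤ R ^ 2 := by gcongr
    nlinarith [sq_nonneg ‖x₁ - ψ x₁‖]
  have ha0 : 0 ≤ S - ε ^ 2 := by
    have : ε ^ 2 ≤ R ^ 2 := by gcongr
    nlinarith [sq_nonneg ‖x₁ - ψ x₁‖]
  have hab : S - ε ^ 2 < S - (ε / 2) ^ 2 := by nlinarith [sq_pos_of_pos hε0]
  have hb0 : 0 < S - (ε / 2) ^ 2 := ha0.trans_lt hab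
  set c := volume.real (closedBall (0 : EuclideanSpace ℝ (Fin d)) (ε / 2)) with hc
  have hc0 : 0 < c := by
    refine ENNReal.toReal_pos ?_ ?_
    · exact (measure_closedBall_pos volume _ (by positivity)).ne'
    · exact (isCompact_closedBall _ _).measure_lt_top.ne
  have hkey : ∀ k : ℕ, c * (S - (ε / 2) ^ 2) ^ k ≤ D * (S - ε ^ 2) ^ k * volume.real B := by
    intro k
    have hid := brouwer_identity ψ hψ R hR S k
    have h1 : ‖∫ x in B, (ContinuousLinearMap.id ℝ _ - fderiv ℝ ψ x).det *
        (S - ‖x - ψ x‖ ^ 2) ^ k‖ ≤ D * (S - ε ^ 2) ^ k * volume.real B := by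
      refine norm_setIntegral_le_of_norm_le_const hBc.measure_lt_top fun x hx => ?_
      rw [norm_mul]
      have hx1 := hlow x hx
      have hx2 := sub_nonneg.2 (hup x hx)
      rw [Real.norm_of_nonneg (pow_nonneg hx2 k)]
      gcongr
      exact hD x hx
    have h2 : c * (S - (ε / 2) ^ 2) ^ k ≤ ∫ x in B, (S - ‖x‖ ^ 2) ^ k := by
      have hint : IntegrableOn (fun x : EuclideanSpace ℝ (Fin d) => (S - ‖x‖ ^ 2) ^ k) B :=
        (by fun_prop : Continuous fun x : EuclideanSpace ℝ (Fin d) =>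
          (S - ‖x‖ ^ 2) ^ k).continuousOn.integrableOn_compact hBc
      have hsub : closedBall (0 : EuclideanSpace ℝ (Fin d)) (ε / 2) ⊆ B :=
        closedBall_subset_closedBall (by linarith)
      calc c * (S - (ε / 2) ^ 2) ^ k
          = ∫ _ in closedBall (0 : EuclideanSpace ℝ (Fin d)) (ε / 2), (S - (ε / 2) ^ 2) ^ k := by
            rw [setIntegral_const, smul_eq_mul]
        _ ≤ ∫ x in closedBall (0 : EuclideanSpace ℝ (Fin d)) (ε / 2), (S - ‖x‖ ^ 2) ^ k := by
            refine setIntegral_mono_on ?_ (hint.mono_set hsub) measurableSet_closedBall ?_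
            · exact integrableOn_const (isCompact_closedBall _ _).measure_lt_top.ne
            · intro x hx
              have : ‖x‖ ≤ ε / 2 := by simpa using hx
              gcongr
        _ ≤ ∫ x in B, (S - ‖x‖ ^ 2) ^ k := by
            refine setIntegral_mono_set hint ?_ hsub.eventuallyLE
            filter_upwards [ae_restrict_mem measurableSet_closedBall] with x hx
            exact pow_nonneg (sub_nonneg.2 (hup' x hx)) k
    rw [← hid] at h2
    exact h2.trans ((le_abs_self _).trans h1)
  have hV : 0 ≤ volume.real B := measureReal_nonneg
  obtain ⟨k, hk⟩ := exists_pow_lt_of_lt_one (show 0 < c / (D * volume.real B + 1) by positivity)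
    ((div_lt_one hb0).2 hab)
  have := hkey k
  rw [div_pow, div_lt_div_iff₀ (by positivity) (by positivity)] at hk
  nlinarith [pow_nonneg ha0 k]

/-- A bounded continuous self-map of Euclidean space has a fixed point: a `C¹` approximation, cut off
far away, has one by `brouwer_smooth`. -/
lemma brouwer_bounded {d : ℕ} (Φ : EuclideanSpace ℝ (Fin d) → EuclideanSpace ℝ (Fin d))
    (hΦ : Continuous Φ) (R : ℝ) (hR : ∀ x, ‖Φ x‖ ≤ R) : ∃ x, Φ x = x := by
  by_contra! hne
  have hR0 : 0 ≤ R := (norm_nonneg _).trans (hR 0)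
  set B := closedBall (0 : EuclideanSpace ℝ (Fin d)) (R + 2) with hB
  have hBc : IsCompact B := isCompact_closedBall 0 (R + 2)
  obtain ⟨x₀, hx₀, hmin⟩ := hBc.exists_isMinOn ⟨0, by simp [hB]; linarith⟩
    (f := fun x => ‖x - Φ x‖) (by fun_prop)
  set δ := min ‖x₀ - Φ x₀‖ 1 with hδ
  have hδ0 : 0 < δ := lt_min (norm_pos_iff.2 (sub_ne_zero.2 (hne x₀).symm)) one_pos
  obtain ⟨g, hg⟩ := exists_contMDiffMap_forall_mem_convex_of_local_const (n := 1)
    (modelWithCornersSelf ℝ (EuclideanSpace ℝ (Fin d))) (t := fun x => ball (Φ x) δ)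
    (fun x => convex_ball _ _) (fun x => ⟨Φ x, by
      have : Tendsto (fun y => dist (Φ x) (Φ y)) (𝓝 x) (𝓝 (dist (Φ x) (Φ x))) :=
        (continuous_const.dist hΦ).tendsto x
      rw [dist_self] at this
      exact this.eventually (gt_mem_nhds hδ0)⟩)
  have hgc : ContDiff ℝ 1 g := g.contMDiff.contDiff
  let χ : ContDiffBump (0 : EuclideanSpace ℝ (Fin d)) := ⟨R + 2, R + 3, by linarith, by linarith⟩
  have hgn : ∀ x, ‖g x‖ < R + 1 := fun x => by
    have h1 : ‖g x - Φ x‖ < δ := by simpa [dist_eq_norm] using hg x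
    have h2 : δ ≤ 1 := min_le_right _ _
    have := norm_le_norm_sub_add (g x) (Φ x)
    linarith [hR x]
  obtain ⟨x, hx⟩ := brouwer_smooth (fun x => χ x • g x) (χ.contDiff.smul hgc) (R + 3)
    (by linarith) (fun x hx => by
      have : χ x = 0 := χ.zero_of_le_dist
        (by simpa using (not_le.1 (fun h => hx (by simpa using h))).le)
      simp [this])
  have hxn : ‖x‖ < R + 1 := by
    rw [← hx, norm_smul, Real.norm_of_nonneg χ.nonneg]
    nlinarith [hgn x, χ.le_one (x := x), χ.nonneg (x := x), norm_nonneg (g x)]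
  have hxB : x ∈ B := by simp [hB]; linarith
  -- The fixed point of `χ • g` lies where `χ = 1`, so it is a fixed point of `g`.
  have hχ : χ x = 1 := χ.one_of_mem_closedBall hxB
  simp only [hχ, one_smul] at hx
  have h1 : ‖g x - Φ x‖ < δ := by simpa [dist_eq_norm] using hg x
  rw [hx] at h1
  have h2 : ‖x₀ - Φ x₀‖ ≤ ‖x - Φ x‖ := hmin hxB
  exact absurd h1 (not_lt.2 ((min_le_left _ _).trans h2))

lemma brouwer_finiteDimensional {V : Type*} [NormedAddCommGroup V] [NormedSpace ℝ V]
    [FiniteDimensional ℝ V] (Φ : V → V) (hΦ : Continuous Φ) (R : ℝ) (hR : ∀ x, ‖Φ x‖ ≤ R) :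
    ∃ x, Φ x = x := by
  let e : V ≃L[ℝ] EuclideanSpace ℝ (Fin (Module.finrank ℝ V)) :=
    ContinuousLinearEquiv.ofFinrankEq (by simp)
  obtain ⟨y, hy⟩ := brouwer_bounded (fun y => e (Φ (e.symm y))) (by fun_prop)
    (‖(e : V →L[ℝ] EuclideanSpace ℝ (Fin (Module.finrank ℝ V)))‖ * R) (fun y =>
      ((e : V →L[ℝ] EuclideanSpace ℝ (Fin (Module.finrank ℝ V))).le_opNorm _).trans
        (by gcongr; exact hR _))
  exact ⟨e.symm y, (e.eq_symm_apply).2 hy⟩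

end Brouwer

section MatrixPart

/-! ### The Hermitian functional calculus -/

open scoped Matrix.Norms.L2Operator Topology
variable {n : ℕ}

/-- On Hermitian matrices, `herm` is the continuous functional calculus of Mathlib. -/
lemma herm_eq_cfc (f : ℝ → ℝ) {A : Matrix (Fin n) (Fin n) ℂ} (hA : A.IsHermitian) :
    herm f A = cfc f A := by
  rw [hA.cfc_eq, herm, dif_pos hA, Matrix.IsHermitian.cfc, Unitary.conjStarAlgAut_apply]
  rfl

lemma herm_isHermitian (f : ℝ → ℝ) (A : Matrix (Fin n) (Fin n) ℂ) : (herm f A).IsHermitian := by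
  by_cases hA : A.IsHermitian
  · rw [herm_eq_cfc f hA]
    exact cfc_predicate f A
  · simp [herm, hA]

lemma spec_finite (A : Matrix (Fin n) (Fin n) ℂ) (f : ℝ → ℝ) : ContinuousOn f (spectrum ℝ A) :=
  (Matrix.finite_real_spectrum (A := A)).continuousOn f

lemma herm_mul (f g : ℝ → ℝ) {A : Matrix (Fin n) (Fin n) ℂ} (hA : A.IsHermitian) :
    herm f A * herm g A = herm (fun x => f x * g x) A := by
  simp only [herm_eq_cfc _ hA]
  exact (cfc_mul f g A (spec_finite A f) (spec_finite A g)).symm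

lemma herm_sub (f g : ℝ → ℝ) {A : Matrix (Fin n) (Fin n) ℂ} (hA : A.IsHermitian) :
    herm (fun x => f x - g x) A = herm f A - herm g A := by
  simp only [herm_eq_cfc _ hA]
  exact cfc_sub f g A (spec_finite A f) (spec_finite A g)

lemma herm_id {A : Matrix (Fin n) (Fin n) ℂ} (hA : A.IsHermitian) :
    herm (fun x => x) A = A := by
  rw [herm_eq_cfc _ hA]; exact cfc_id' ℝ A hA

lemma herm_const (c : ℝ) {A : Matrix (Fin n) (Fin n) ℂ} (hA : A.IsHermitian) :
    herm (fun _ => c) A = c • 1 := by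
  rw [herm_eq_cfc _ hA, ← Algebra.algebraMap_eq_smul_one]
  exact cfc_const c A hA

lemma herm_congr {f g : ℝ → ℝ} {A : Matrix (Fin n) (Fin n) ℂ} (hA : A.IsHermitian)
    (h : ∀ i, f (hA.eigenvalues i) = g (hA.eigenvalues i)) : herm f A = herm g A := by
  simp only [herm, dif_pos hA, h]

lemma herm_posSemidef {f : ℝ → ℝ} {A : Matrix (Fin n) (Fin n) ℂ} (hA : A.IsHermitian)
    (h : ∀ i, 0 ≤ f (hA.eigenvalues i)) : (herm f A).PosSemidef := by
  rw [herm, dif_pos hA]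
  refine Matrix.PosSemidef.mul_mul_conjTranspose_same (Matrix.PosSemidef.diagonal ?_) _
  intro i
  simpa using h i

lemma herm_posDef {f : ℝ → ℝ} {A : Matrix (Fin n) (Fin n) ℂ} (hA : A.IsHermitian)
    (h : ∀ i, 0 < f (hA.eigenvalues i)) : (herm f A).PosDef := by
  rw [herm, dif_pos hA]
  refine (Matrix.IsUnit.posDef_star_right_conjugate_iff
    (Unitary.toUnits hA.eigenvectorUnitary).isUnit).2 (Matrix.posDef_diagonal_iff.2 ?_)
  intro i
  simpa using h i

lemma herm_mulVec (f : ℝ → ℝ) {A : Matrix (Fin n) (Fin n) ℂ} (hA : A.IsHermitian) (j : Fin n) :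
    herm f A *ᵥ (hA.eigenvectorBasis j).ofLp =
      ((f (hA.eigenvalues j) : ℝ) : ℂ) • (hA.eigenvectorBasis j).ofLp := by
  have h1 : (star (hA.eigenvectorUnitary : Matrix (Fin n) (Fin n) ℂ)) *ᵥ
      (hA.eigenvectorBasis j).ofLp = Pi.single j 1 := by
    exact hA.star_eigenvectorUnitary_mulVec j
  rw [herm, dif_pos hA, ← Matrix.mulVec_mulVec, ← Matrix.mulVec_mulVec, h1,
    Matrix.diagonal_mulVec_single, mul_one, ← mul_one ((f (hA.eigenvalues j) : ℝ) : ℂ),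
    ← smul_eq_mul, Pi.single_smul, Matrix.mulVec_smul, hA.eigenvectorUnitary_mulVec]
  simp

lemma continuous_herm {Y : Type*} [TopologicalSpace Y] {f : ℝ → ℝ} (hf : Continuous f)
    {a : Y → Matrix (Fin n) (Fin n) ℂ} (ha : Continuous a) (hh : ∀ y, (a y).IsHermitian) :
    Continuous fun y => herm f (a y) := by
  simp_rw [fun y => herm_eq_cfc f (hh y)]
  exact Continuous.cfc_of_mem_nhdsSet f (s := Set.univ) Filter.univ_mem ha (fun y => hh y)
    hf.continuousOn

lemma continuous_mlog {Y : Type*} [TopologicalSpace Y]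
    {a : Y → Matrix (Fin n) (Fin n) ℂ} (ha : Continuous a) (hh : ∀ y, (a y).PosDef) :
    Continuous fun y => mlog (a y) := by
  unfold mlog
  simp_rw [fun y => herm_eq_cfc Real.log (hh y).1]
  refine Continuous.cfc_of_mem_nhdsSet Real.log (s := Set.Ioi 0) ?_ ha (fun y => (hh y).1)
    (Real.continuousOn_log.mono (fun x hx => ne_of_gt hx))
  refine isOpen_Ioi.mem_nhdsSet.2 (Set.iUnion_subset fun y x hx => ?_)
  rw [(hh y).1.spectrum_real_eq_range_eigenvalues] at hx
  obtain ⟨i, rfl⟩ := hx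
  exact (hh y).eigenvalues_pos i

lemma continuous_inv_posDef {Y : Type*} [TopologicalSpace Y]
    {a : Y → Matrix (Fin n) (Fin n) ℂ} (ha : Continuous a) (hh : ∀ y, (a y).PosDef) :
    Continuous fun y => (a y)⁻¹ := by
  simp_rw [Matrix.inv_def, Ring.inverse_eq_inv']
  exact (ha.matrix_det.inv₀ fun y => (hh y).det_pos.ne').smul ha.matrix_adjugate

/-! ### The geometric mean as solution of a Riccati equation -/

lemma msqrt_posDef {A : Matrix (Fin n) (Fin n) ℂ} (hA : A.PosDef) : (msqrt A).PosDef :=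
  herm_posDef hA.1 fun i => Real.sqrt_pos.2 (hA.eigenvalues_pos i)

lemma msqrt_mul_self {A : Matrix (Fin n) (Fin n) ℂ} (hA : A.PosDef) : msqrt A * msqrt A = A := by
  rw [msqrt, herm_mul _ _ hA.1]
  conv_rhs => rw [← herm_id hA.1]
  exact herm_congr hA.1 fun i => Real.mul_self_sqrt (hA.eigenvalues_pos i).le

lemma posDef_conj {S Q : Matrix (Fin n) (Fin n) ℂ} (hS : S.PosDef) (hQ : Q.PosDef) :
    (S * Q * S).PosDef := by
  have := (Matrix.IsUnit.posDef_star_right_conjugate_iff (x := Q) hS.isUnit).2 hQ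
  rwa [Matrix.star_eq_conjTranspose, hS.1] at this

lemma geom_inner_posDef {A B : Matrix (Fin n) (Fin n) ℂ} (hA : A.PosDef) (hB : B.PosDef) :
    ((msqrt A)⁻¹ * B * (msqrt A)⁻¹).PosDef :=
  posDef_conj (msqrt_posDef hA).inv hB

lemma geom_posDef {A B : Matrix (Fin n) (Fin n) ℂ} (hA : A.PosDef) (hB : B.PosDef) :
    (geom A B).PosDef :=
  posDef_conj (msqrt_posDef hA) (msqrt_posDef (geom_inner_posDef hA hB))

/-- `G = A ♯ X⁻¹` solves the Riccati equation `G X G = A`. -/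
lemma geom_riccati {A X : Matrix (Fin n) (Fin n) ℂ} (hA : A.PosDef) (hX : X.PosDef) :
    geom A X⁻¹ * X * geom A X⁻¹ = A := by
  unfold geom
  have hS := (Matrix.isUnit_iff_isUnit_det _).1 (msqrt_posDef hA).isUnit
  have hT := geom_inner_posDef hA hX.inv
  have hXu := (Matrix.isUnit_iff_isUnit_det _).1 hX.isUnit
  have hSS := msqrt_mul_self hA
  have hQQ := msqrt_mul_self hT
  have hQ := (Matrix.isUnit_iff_isUnit_det _).1 (msqrt_posDef hT).isUnit
  set S := msqrt A
  set Q := msqrt (S⁻¹ * X⁻¹ * S⁻¹)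
  have h1 : Q * (S * X * S) * Q = 1 := by
    have h2 : (S * X * S) * (Q * Q) = 1 := by
      rw [hQQ]
      calc S * X * S * (S⁻¹ * X⁻¹ * S⁻¹) = S * (X * (S * S⁻¹) * X⁻¹) * S⁻¹ := by
            simp only [Matrix.mul_assoc]
        _ = 1 := by
            rw [Matrix.mul_nonsing_inv _ hS, Matrix.mul_one, Matrix.mul_nonsing_inv _ hXu,
              Matrix.mul_one, Matrix.mul_nonsing_inv _ hS]
    rw [← Matrix.mul_assoc] at h2
    have h3 := mul_eq_one_comm.1 h2
    rwa [← Matrix.mul_assoc] at h3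
  calc S * Q * S * X * (S * Q * S) = S * (Q * (S * X * S) * Q) * S := by
        simp only [Matrix.mul_assoc]
    _ = A := by rw [h1, Matrix.mul_one, hSS]

lemma continuous_geom_inv {Y : Type*} [TopologicalSpace Y] {A : Matrix (Fin n) (Fin n) ℂ}
    (hA : A.PosDef) {a : Y → Matrix (Fin n) (Fin n) ℂ} (ha : Continuous a)
    (hh : ∀ y, (a y).PosDef) : Continuous fun y => geom A (a y)⁻¹ := by
  unfold geom
  have h1 : Continuous fun y => (msqrt A)⁻¹ * (a y)⁻¹ * (msqrt A)⁻¹ :=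
    (continuous_const.mul (continuous_inv_posDef ha hh)).mul continuous_const
  exact (continuous_const.mul (continuous_herm Real.continuous_sqrt h1
    fun y => (geom_inner_posDef hA (hh y).inv).1)).mul continuous_const

/-! ### Quadratic forms and the boundary inequalities -/

/-- The real part of the quadratic form `⟨v, M v⟩`; for Hermitian `M` the form is already real. -/
noncomputable def qform (v : Fin n → ℂ) (M : Matrix (Fin n) (Fin n) ℂ) : ℝ :=
  (star v ⬝ᵥ M *ᵥ v).re

lemma qform_add (v : Fin n → ℂ) (M N : Matrix (Fin n) (Fin n) ℂ) :
    qform v (M + N) = qform v M + qform v N := by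
  simp [qform, Matrix.add_mulVec, dotProduct_add]

lemma qform_sub (v : Fin n → ℂ) (M N : Matrix (Fin n) (Fin n) ℂ) :
    qform v (M - N) = qform v M - qform v N := by
  simp [qform, Matrix.sub_mulVec, dotProduct_sub]

lemma qform_smul (v : Fin n → ℂ) (c : ℝ) (M : Matrix (Fin n) (Fin n) ℂ) :
    qform v (c • M) = c * qform v M := by
  simp [qform, Matrix.smul_mulVec, dotProduct_smul]

lemma qform_sum {ι : Type*} (s : Finset ι) (v : Fin n → ℂ)
    (M : ι → Matrix (Fin n) (Fin n) ℂ) :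
    qform v (∑ i ∈ s, M i) = ∑ i ∈ s, qform v (M i) := by
  simp [qform, Matrix.sum_mulVec, dotProduct_sum]

lemma qform_nonneg {v : Fin n → ℂ} {M : Matrix (Fin n) (Fin n) ℂ} (hM : M.PosSemidef) :
    0 ≤ qform v M := hM.re_dotProduct_nonneg v

lemma qform_mul_right {v : Fin n → ℂ} {X : Matrix (Fin n) (Fin n) ℂ} {c : ℝ}
    (hv : X *ᵥ v = (c : ℂ) • v) (M : Matrix (Fin n) (Fin n) ℂ) :
    qform v (M * X) = c * qform v M := by
  simp [qform, ← Matrix.mulVec_mulVec, hv, Matrix.mulVec_smul, dotProduct_smul]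

lemma qform_mul_left {v : Fin n → ℂ} {X : Matrix (Fin n) (Fin n) ℂ} {c : ℝ}
    (hX : X.IsHermitian) (hv : X *ᵥ v = (c : ℂ) • v) (M : Matrix (Fin n) (Fin n) ℂ) :
    qform v (X * M) = c * qform v M := by
  have h : star v ᵥ* X = (c : ℂ) • star v := by
    have := congrArg star hv
    rwa [Matrix.star_mulVec, hX, star_smul, Complex.star_def, Complex.conj_ofReal] at this
  rw [qform, ← Matrix.mulVec_mulVec, Matrix.dotProduct_mulVec, h]
  simp [qform, smul_dotProduct]

lemma qform_eigen {v : Fin n → ℂ} {X : Matrix (Fin n) (Fin n) ℂ} {c : ℝ}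
    (hv : X *ᵥ v = (c : ℂ) • v) : qform v X = c * qform v 1 := by
  simpa using qform_mul_right hv 1

/-- The upper boundary inequality. In the direction `v`, where `X v = β v`, positivity of
`(G - 1) X (G - 1) = A - G X - X G + X` and `A ≤ β` force `⟨v, G v⟩ ≤ ⟨v, v⟩`, and
`log G ≤ G - 1`. -/
lemma qform_mlog_nonpos {A G X : Matrix (Fin n) (Fin n) ℂ} {β : ℝ} (hβ : 0 < β) (hG : G.PosDef)
    (hX : X.PosDef) (hGX : G * X * G = A) (hA : (β • 1 - A).PosSemidef) {v : Fin n → ℂ}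
    (hv : X *ᵥ v = (β : ℂ) • v) : qform v (mlog G) ≤ 0 := by
  have h1 : 0 ≤ qform v (G - (1 : ℝ) • 1 - mlog G) := by
    have : (herm (fun x => x - 1 - Real.log x) G).PosSemidef :=
      herm_posSemidef hG.1 fun i => by
        linarith [Real.log_le_sub_one_of_pos (hG.eigenvalues_pos i)]
    rw [herm_sub (fun x => x - 1) Real.log hG.1, herm_sub (fun x => x) (fun _ => 1) hG.1,
      herm_id hG.1, herm_const 1 hG.1] at this
    exact qform_nonneg this
  have h2 : 0 ≤ qform v (A - G * X - X * G + X) := by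
    have := hX.posSemidef.conjTranspose_mul_mul_same (G - 1)
    have h3 : (G - 1)ᴴ * X * (G - 1) = A - G * X - X * G + X := by
      rw [Matrix.conjTranspose_sub, hG.1, Matrix.conjTranspose_one, ← hGX]
      noncomm_ring
    rw [h3] at this
    exact qform_nonneg this
  have h3 := qform_nonneg (v := v) hA
  rw [qform_add, qform_sub, qform_sub, qform_mul_right hv, qform_mul_left hX.1 hv,
    qform_eigen hv] at h2
  rw [qform_sub, qform_smul] at h3
  rw [qform_sub, qform_sub, qform_smul] at h1
  have h4 : 0 ≤ 2 * β * (qform v 1 - qform v G) := by nlinarith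
  have h5 := nonneg_of_mul_nonneg_right h4 (by positivity)
  linarith

/-- The lower boundary inequality. In the direction `v`, where `X v = α v`, positivity of
`G⁻¹ (A - α) G⁻¹ = X - α G⁻²` forces `⟨v, G⁻² v⟩ ≤ ⟨v, v⟩`, and `log G ≥ (1 - G⁻²) / 2`. -/
lemma qform_mlog_nonneg {A G X : Matrix (Fin n) (Fin n) ℂ} {α : ℝ} (hα : 0 < α) (hG : G.PosDef)
    (hGX : G * X * G = A) (hA : (A - α • 1).PosSemidef) {v : Fin n → ℂ}
    (hv : X *ᵥ v = (α : ℂ) • v) : 0 ≤ qform v (mlog G) := by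
  set J := herm (fun x => x⁻¹) G with hJ
  have hJG : J * G = 1 := by
    have h := herm_mul (fun x => x⁻¹) (fun x => x) hG.1
    rw [herm_id hG.1] at h
    rw [hJ, h, herm_congr (g := fun _ => 1) hG.1
      (fun i => inv_mul_cancel₀ (hG.eigenvalues_pos i).ne'), herm_const 1 hG.1, one_smul]
  have hGJ : G * J = 1 := mul_eq_one_comm.1 hJG
  have hJh : Jᴴ = J := herm_isHermitian _ G
  have h1 : 0 ≤ qform v (mlog G - ((1 / 2 : ℝ) • 1 - (1 / 2 : ℝ) • (J * J))) := by
    have : (herm (fun x => Real.log x - (1 / 2 - 1 / 2 * (x⁻¹ * x⁻¹))) G).PosSemidef :=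
      herm_posSemidef hG.1 fun i => by
        have hp := hG.eigenvalues_pos i
        -- `log y ≤ y - 1` at `y = x⁻²`.
        have := Real.log_le_sub_one_of_pos (mul_pos (inv_pos.2 hp) (inv_pos.2 hp))
        rw [Real.log_mul (inv_pos.2 hp).ne' (inv_pos.2 hp).ne', Real.log_inv] at this
        linarith
    rw [herm_sub Real.log (fun x => 1 / 2 - 1 / 2 * (x⁻¹ * x⁻¹)) hG.1,
      herm_sub (fun _ => 1 / 2) (fun x => 1 / 2 * (x⁻¹ * x⁻¹)) hG.1, herm_const _ hG.1,
      ← herm_mul (fun _ => 1 / 2) (fun x => x⁻¹ * x⁻¹) hG.1, herm_const _ hG.1,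
      ← herm_mul (fun x => x⁻¹) (fun x => x⁻¹) hG.1, smul_mul_assoc, one_mul] at this
    exact qform_nonneg this
  have h2 : 0 ≤ qform v (X - α • (J * J)) := by
    have := hA.conjTranspose_mul_mul_same J
    have h3 : Jᴴ * (A - α • 1) * J = X - α • (J * J) := by
      rw [hJh, ← hGX, mul_sub, sub_mul, mul_smul_comm, mul_one, smul_mul_assoc]
      congr 1
      calc J * (G * X * G) * J = (J * G) * X * (G * J) := by simp only [Matrix.mul_assoc]
        _ = X := by rw [hJG, hGJ, one_mul, mul_one]
    rw [h3] at this
    exact qform_nonneg this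
  rw [qform_sub, qform_smul, qform_eigen hv] at h2
  rw [qform_sub, qform_sub, qform_smul, qform_smul] at h1
  have h4 : 0 ≤ α * (qform v 1 - qform v (J * J)) := by linarith
  have h5 := nonneg_of_mul_nonneg_right h4 hα
  linarith

/-! ### Spectral truncation -/

/-- The Hermitian part of `M` with its spectrum truncated to `[α, β]`. Passing to the Hermitian part
makes this a continuous map on all matrices. -/
noncomputable def clampHerm (α β : ℝ) (M : Matrix (Fin n) (Fin n) ℂ) :
    Matrix (Fin n) (Fin n) ℂ :=
  herm (fun x => max α (min x β)) ((1 / 2 : ℝ) • (M + Mᴴ))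

lemma herm_part (M : Matrix (Fin n) (Fin n) ℂ) : ((1 / 2 : ℝ) • (M + Mᴴ)).IsHermitian := by
  simp [Matrix.IsHermitian, add_comm]

lemma herm_part_eq {M : Matrix (Fin n) (Fin n) ℂ} (hM : M.IsHermitian) :
    (1 / 2 : ℝ) • (M + Mᴴ) = M := by
  rw [hM, ← two_smul ℝ M, smul_smul]
  norm_num

lemma clampHerm_posDef {α β : ℝ} (hα : 0 < α) (M : Matrix (Fin n) (Fin n) ℂ) :
    (clampHerm α β M).PosDef :=
  herm_posDef (herm_part M) fun _ => hα.trans_le (le_max_left _ _)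

lemma clampHerm_lower (α β : ℝ) (M : Matrix (Fin n) (Fin n) ℂ) :
    (clampHerm α β M - α • 1).PosSemidef := by
  rw [clampHerm, ← herm_const α (herm_part M), ← herm_sub _ _ (herm_part M)]
  exact herm_posSemidef (herm_part M) fun _ => sub_nonneg.2 (le_max_left _ _)

lemma clampHerm_upper {α β : ℝ} (hαβ : α ≤ β) (M : Matrix (Fin n) (Fin n) ℂ) :
    (β • 1 - clampHerm α β M).PosSemidef := by
  rw [clampHerm, ← herm_const β (herm_part M), ← herm_sub _ _ (herm_part M)]
  exact herm_posSemidef (herm_part M) fun _ => sub_nonneg.2 (max_le hαβ (min_le_right _ _))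

lemma continuous_clampHerm (α β : ℝ) :
    Continuous fun M : Matrix (Fin n) (Fin n) ℂ => clampHerm α β M :=
  continuous_herm (by fun_prop) (by fun_prop) herm_part

lemma norm_clampHerm_le {α β : ℝ} (hα : 0 < α) (hαβ : α ≤ β) (M : Matrix (Fin n) (Fin n) ℂ) :
    ‖clampHerm α β M‖ ≤ β := by
  rw [clampHerm, herm_eq_cfc _ (herm_part M)]
  refine norm_cfc_le (hα.le.trans hαβ) fun x _ => ?_
  rw [Real.norm_of_nonneg (hα.le.trans (le_max_left _ _))]
  exact max_le hαβ (min_le_right _ _)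

lemma clampHerm_clampHerm {α β : ℝ} (M : Matrix (Fin n) (Fin n) ℂ) :
    clampHerm α β (clampHerm α β M) = clampHerm α β M := by
  have h : (clampHerm α β M).IsHermitian := herm_isHermitian _ _
  rw [clampHerm, herm_part_eq h, herm_eq_cfc _ h, clampHerm, herm_eq_cfc _ (herm_part M)]
  refine (cfc_comp' (fun x : ℝ => max α (min x β)) (fun x : ℝ => max α (min x β))
    ((1 / 2 : ℝ) • (M + Mᴴ)) (by fun_prop) (by fun_prop) (herm_part M)).symm.trans ?_
  congr 1
  ext x
  grind

end MatrixPart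

/-! ### Existence of a solution -/

theorem stmt0 {m n : ℕ} (w : Fin m → ℝ) (hw : ∀ i, 0 < w i) (hw1 : ∑ i, w i = 1)
    (A : Fin m → Matrix (Fin n) (Fin n) ℂ) (hA : ∀ i, (A i).PosDef)
    (α β : ℝ) (hα : 0 < α) (hαβ : α ≤ β)
    (hlo : ∀ i, (A i - α • (1 : Matrix (Fin n) (Fin n) ℂ)).PosSemidef)
    (hhi : ∀ i, (β • (1 : Matrix (Fin n) (Fin n) ℂ) - A i).PosSemidef) :
    ∃ X : Matrix (Fin n) (Fin n) ℂ, X ∈ Gamma w A ∧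
      (X - α • (1 : Matrix (Fin n) (Fin n) ℂ)).PosSemidef ∧
      (β • (1 : Matrix (Fin n) (Fin n) ℂ) - X).PosSemidef := by
  open scoped Matrix.Norms.L2Operator in
  let F : Matrix (Fin n) (Fin n) ℂ → Matrix (Fin n) (Fin n) ℂ :=
    fun X => ∑ i, w i • mlog (geom (A i) X⁻¹)
  let Φ : Matrix (Fin n) (Fin n) ℂ → Matrix (Fin n) (Fin n) ℂ :=
    fun M => clampHerm α β M + F (clampHerm α β M)
  have hpd : ∀ M : Matrix (Fin n) (Fin n) ℂ, (clampHerm α β M).PosDef := clampHerm_posDef hα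
  have hgpd : ∀ i M, (geom (A i) (clampHerm α β M)⁻¹).PosDef := fun i M =>
    geom_posDef (hA i) (hpd M).inv
  have hΦ : Continuous Φ := by
    refine (continuous_clampHerm α β).add (continuous_finsetSum _ fun i _ => ?_)
    exact (continuous_mlog (continuous_geom_inv (hA i) (continuous_clampHerm α β) hpd)
      (hgpd i)).const_smul (w i)
  -- `Φ` factors through the clamp, whose range lies in a compact ball.
  obtain ⟨R, hR⟩ := (isCompact_closedBall (0 : Matrix (Fin n) (Fin n) ℂ)
    β).exists_bound_of_continuousOn hΦ.continuousOn
  have hbd : ∀ M, ‖Φ M‖ ≤ R := fun M => by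
    have := hR (clampHerm α β M) (by simpa using norm_clampHerm_le hα hαβ M)
    simpa only [Φ, clampHerm_clampHerm] using this
  obtain ⟨H, hH⟩ := brouwer_finiteDimensional Φ hΦ R hbd
  set X := clampHerm α β H with hXdef
  have hXpd : X.PosDef := hpd H
  have hHX : X + F X = H := hH
  have hFh : (F X).IsHermitian := by
    refine isSelfAdjoint_sum _ fun i _ => ?_
    exact IsSelfAdjoint.smul (by rfl) (herm_isHermitian _ _)
  have hHh : H.IsHermitian := by
    rw [← hHX]
    exact hXpd.1.add hFh
  have hXH : X = herm (fun x => max α (min x β)) H := by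
    rw [hXdef, clampHerm, herm_part_eq hHh]
  -- No eigenvalue of `H` lies outside `[α, β]`.
  have hclamp : ∀ j, max α (min (hHh.eigenvalues j) β) = hHh.eigenvalues j := by
    intro j
    set h := hHh.eigenvalues j with hh
    set v := (hHh.eigenvectorBasis j).ofLp with hv
    have hXv : X *ᵥ v = ((max α (min h β) : ℝ) : ℂ) • v := by
      rw [hXH]; exact herm_mulVec _ hHh j
    have hHv : H *ᵥ v = (h : ℂ) • v := by
      have := herm_mulVec (fun x => x) hHh j
      rwa [herm_id hHh] at this
    have hone : qform v 1 = 1 := by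
      have := hHh.eigenvectorBasis.orthonormal.1 j
      rw [qform, Matrix.one_mulVec, dotProduct_comm, ← EuclideanSpace.inner_eq_star_dotProduct,
        inner_self_eq_norm_sq_to_K, this]
      simp
    have hqF : qform v (F X) = h - max α (min h β) := by
      have h1 := qform_eigen hHv
      rw [← hHX, qform_add, qform_eigen hXv, hone] at h1
      linarith
    have hsum : qform v (F X) = ∑ i, w i * qform v (mlog (geom (A i) X⁻¹)) := by
      simp only [F, qform_sum, qform_smul]
    rcases lt_trichotomy h α with hlt | heq | hgt
    · have hc : max α (min h β) = α := max_eq_left ((min_le_left _ _).trans hlt.le)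
      rw [hc] at hXv hqF
      have : 0 ≤ qform v (F X) := by
        rw [hsum]
        exact Finset.sum_nonneg fun i _ => mul_nonneg (hw i).le
          (qform_mlog_nonneg hα (hgpd i H) (geom_riccati (hA i) hXpd) (hlo i) hXv)
      linarith
    · rw [heq, min_eq_left hαβ, max_self]
    · rcases le_or_gt h β with hle | hgt'
      · rw [min_eq_left hle, max_eq_right hgt.le]
      · have hc : max α (min h β) = β := by rw [min_eq_right hgt'.le, max_eq_right hαβ]
        rw [hc] at hXv hqF
        have : qform v (F X) ≤ 0 := by
          rw [hsum]
          exact Finset.sum_nonpos fun i _ => mul_nonpos_of_nonneg_of_nonpos (hw i).le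
            (qform_mlog_nonpos (hα.trans_le hαβ) (hgpd i H) hXpd
              (geom_riccati (hA i) hXpd) (hhi i) hXv)
        linarith
  have hXeq : X = H := by
    rw [hXH, herm_congr (g := fun x => x) hHh hclamp, herm_id hHh]
  have hF0 : F X = 0 := by
    rw [hXeq] at hHX ⊢
    simpa using hHX
  exact ⟨X, ⟨hXpd, hF0⟩, clampHerm_lower α β H, clampHerm_upper hαβ H⟩
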